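/- arXiv:1706.00226 — 2 statements merged into one kernel-verified Lean document; each statement's English description precedes it below -/
import Mathlib

section
/- Let S be the 2×2 matrix with zero diagonal and both off-diagonal entries equal to 1, and let H' := H ⊕ S (an (n+2)×(n+2) hermitian matrix). Then the map [x] ↦ [(x,0,0)] is an R-module isomorphism from Tor_R(R^n/H̄R^n) onto Tor_R(R^{n+2}/H̄'R^{n+2}), Δ annihilates Tor_R(R^{n+2}/H̄'R^{n+2}) and so defines λ_{H'}, and this isomorphism is an isometry: λ_{H'}([(x,0,0)],[(y,0,0)]) = λ_H([x],[y]) for all torsion classes [x], [y]. -/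
open Matrix

/-- The class of `v` in the cokernel of `M` is a torsion element. -/
def torsionClass {R : Type*} [CommRing R] {m : Type*} [Fintype m]
    (M : Matrix m m R) (v : m → R) : Prop :=
  ∃ r : R, r ≠ 0 ∧ ∃ u : m → R, M *ᵥ u = r • v

/-!
An invertible block `S` contributes nothing to the cokernel of `H ⊕ S`, so a system
`(H ⊕ S) w = z` is solvable exactly when its `H`-part is. If `S̄` kills the second component of
`X₀`, that component vanishes, hence `X₀ᵀ (H ⊕ S) Ȳ₀` only sees the `H`-parts of `X₀` and `Y₀`.
Finally, for hermitian `H` the value `xᵀ H ȳ` depends only on `H̄ x` and `H̄ y`. Since both pairings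
are computed with the same `Δ`, they agree in `Q(R)` and not merely modulo `R`.
-/

section BlockSum

variable {R ι κ : Type*}

theorem map_fromBlocks_zero_zero {S : Type*} [NonAssocSemiring R] [NonAssocSemiring S]
    (f : R →+* S) (A : Matrix ι ι R) (D : Matrix κ κ R) :
    (fromBlocks A 0 0 D).map f = fromBlocks (A.map f) 0 0 (D.map f) := by
  simp [fromBlocks_map]

variable [Fintype ι] [Fintype κ]

theorem fromBlocks_zero_zero_mulVec_eq_iff [NonUnitalNonAssocSemiring R]
    {A : Matrix ι ι R} {D : Matrix κ κ R} {w z : ι ⊕ κ → R} :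
    fromBlocks A 0 0 D *ᵥ w = z ↔
      A *ᵥ (w ∘ Sum.inl) = z ∘ Sum.inl ∧ D *ᵥ (w ∘ Sum.inr) = z ∘ Sum.inr := by
  rw [fromBlocks_mulVec, zero_mulVec, zero_mulVec, add_zero, zero_add, ← Sum.elim_eq_iff,
    Sum.elim_comp_inl_inr]

theorem dotProduct_fromBlocks_zero_zero_mulVec_of_comp_inr_eq_zero [NonUnitalNonAssocSemiring R]
    (A : Matrix ι ι R) (D : Matrix κ κ R) {x : ι ⊕ κ → R} (hx : x ∘ Sum.inr = 0)
    (y : ι ⊕ κ → R) :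
    x ⬝ᵥ (fromBlocks A 0 0 D *ᵥ y) = (x ∘ Sum.inl) ⬝ᵥ (A *ᵥ (y ∘ Sum.inl)) := by
  rw [← Sum.elim_comp_inl_inr x, hx, fromBlocks_mulVec, sumElim_dotProduct_sumElim]
  simp

theorem exists_fromBlocks_zero_zero_mulVec_eq_iff [Semiring R] [DecidableEq κ]
    {A : Matrix ι ι R} {D : Matrix κ κ R} (hD : IsUnit D) {z : ι ⊕ κ → R} :
    (∃ w, fromBlocks A 0 0 D *ᵥ w = z) ↔ ∃ u, A *ᵥ u = z ∘ Sum.inl := by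
  simp only [fromBlocks_zero_zero_mulVec_eq_iff]
  constructor
  · rintro ⟨w, hw, -⟩
    exact ⟨w ∘ Sum.inl, hw⟩
  · rintro ⟨u, hu⟩
    obtain ⟨v, hv⟩ :=
      mulVec_surjective_iff_exists_right_inverse.2 hD.exists_right_inv (z ∘ Sum.inr)
    exact ⟨Sum.elim u v, hu, hv⟩

theorem torsionClass_fromBlocks_zero_zero_iff [CommRing R] [DecidableEq κ]
    {A : Matrix ι ι R} {D : Matrix κ κ R} (hD : IsUnit D) {z : ι ⊕ κ → R} :
    torsionClass (fromBlocks A 0 0 D) z ↔ torsionClass A (z ∘ Sum.inl) :=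
  exists_congr fun r => and_congr_right fun _ =>
    exists_fromBlocks_zero_zero_mulVec_eq_iff hD (z := r • z)

end BlockSum

section Hermitian

variable {R ι : Type*} [CommSemiring R] [Fintype ι] {σ : R →+* R} {H : Matrix ι ι R}

theorem mulVec_comp_of_transpose_map_eq (hH : (H.map σ)ᵀ = H) (u : ι → R) :
    H *ᵥ (σ ∘ u) = σ ∘ (H.map σ *ᵥ u) := by
  have map_map_eq : (H.map σ).map σ = H := by
    rw [← transpose_transpose ((H.map σ).map σ), ← transpose_map, hH, hH]
  ext i
  rw [Function.comp_apply, RingHom.map_mulVec, map_map_eq]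

theorem dotProduct_mulVec_comp_congr (hH : (H.map σ)ᵀ = H) {x x' y y' : ι → R}
    (hx : H.map σ *ᵥ x = H.map σ *ᵥ x') (hy : H.map σ *ᵥ y = H.map σ *ᵥ y') :
    x ⬝ᵥ (H *ᵥ (σ ∘ y)) = x' ⬝ᵥ (H *ᵥ (σ ∘ y')) := by
  have vecMul_eq (u : ι → R) : u ᵥ* H = H.map σ *ᵥ u := by
    conv_lhs => rw [← hH, vecMul_transpose]
  calc x ⬝ᵥ (H *ᵥ (σ ∘ y))
      = x ⬝ᵥ (H *ᵥ (σ ∘ y')) := by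
        rw [mulVec_comp_of_transpose_map_eq hH, hy, ← mulVec_comp_of_transpose_map_eq hH]
    _ = x' ⬝ᵥ (H *ᵥ (σ ∘ y')) := by
        rw [dotProduct_mulVec, dotProduct_mulVec, vecMul_eq, vecMul_eq, hx]

end Hermitian

section Stabilization

variable {R ι κ : Type*} [Fintype ι] [Fintype κ] [DecidableEq κ]

theorem dotProduct_fromBlocks_mulVec_comp_eq [CommSemiring R] {σ : R →+* R}
    {H : Matrix ι ι R} (hH : (H.map σ)ᵀ = H) {S : Matrix κ κ R} (hS : IsUnit S)
    {v w v₀ w₀ : ι → R} {V₀ W₀ : ι ⊕ κ → R}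
    (hv : H.map σ *ᵥ v₀ = v) (hw : H.map σ *ᵥ w₀ = w)
    (hV : (fromBlocks H 0 0 S).map σ *ᵥ V₀ = Sum.elim v 0)
    (hW : (fromBlocks H 0 0 S).map σ *ᵥ W₀ = Sum.elim w 0) :
    V₀ ⬝ᵥ (fromBlocks H 0 0 S *ᵥ (σ ∘ W₀)) = v₀ ⬝ᵥ (H *ᵥ (σ ∘ w₀)) := by
  rw [map_fromBlocks_zero_zero, fromBlocks_zero_zero_mulVec_eq_iff, Sum.elim_comp_inl,
    Sum.elim_comp_inr] at hV hW
  have V₀_inr : V₀ ∘ Sum.inr = 0 :=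
    mulVec_injective_of_isUnit (hS.map σ.mapMatrix) (hV.2.trans (mulVec_zero _).symm)
  rw [dotProduct_fromBlocks_zero_zero_mulVec_of_comp_inr_eq_zero H S V₀_inr]
  exact dotProduct_mulVec_comp_congr hH (hV.1.trans hv.symm) (hW.1.trans hw.symm)

theorem lambda_stabilization_hyperbolic_general [CommRing R] (σ : R →+* R)
    (H : Matrix ι ι R) (hH : (H.map σ)ᵀ = H) (S : Matrix κ κ R) (hS : IsUnit S)
    (Δ : R) (hΔann : ∀ v, torsionClass (H.map σ) v → ∃ v₀, H.map σ *ᵥ v₀ = Δ • v) :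
    (∀ x : ι → R, torsionClass (H.map σ) x ↔
      torsionClass ((fromBlocks H 0 0 S).map σ) (Sum.elim x 0)) ∧
    (∀ x : ι → R, (∃ w', (fromBlocks H 0 0 S).map σ *ᵥ w' = Sum.elim x 0) ↔
      ∃ w, H.map σ *ᵥ w = x) ∧
    (∀ x' : ι ⊕ κ → R, torsionClass ((fromBlocks H 0 0 S).map σ) x' →
      ∃ x, torsionClass (H.map σ) x ∧
        ∃ w', (fromBlocks H 0 0 S).map σ *ᵥ w' = x' - Sum.elim x 0) ∧
    (∀ x' : ι ⊕ κ → R, torsionClass ((fromBlocks H 0 0 S).map σ) x' →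
      ∃ x₀', (fromBlocks H 0 0 S).map σ *ᵥ x₀' = Δ • x') ∧
    (∀ (x y x₀ y₀ : ι → R) (X₀ Y₀ : ι ⊕ κ → R),
      H.map σ *ᵥ x₀ = Δ • x → H.map σ *ᵥ y₀ = Δ • y →
      (fromBlocks H 0 0 S).map σ *ᵥ X₀ = Δ • Sum.elim x 0 →
      (fromBlocks H 0 0 S).map σ *ᵥ Y₀ = Δ • Sum.elim y 0 →
      X₀ ⬝ᵥ (fromBlocks H 0 0 S *ᵥ (σ ∘ Y₀)) = x₀ ⬝ᵥ (H *ᵥ (σ ∘ y₀))) := by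
  have smul_elim (x : ι → R) : Δ • Sum.elim x (0 : κ → R) = Sum.elim (Δ • x) 0 := by
    ext (i | i) <;> simp
  have solvable_iff (z : ι ⊕ κ → R) :
      (∃ w, (fromBlocks H 0 0 S).map σ *ᵥ w = z) ↔ ∃ u, H.map σ *ᵥ u = z ∘ Sum.inl := by
    rw [map_fromBlocks_zero_zero]
    exact exists_fromBlocks_zero_zero_mulVec_eq_iff (hS.map σ.mapMatrix)
  have torsion_iff (z : ι ⊕ κ → R) : torsionClass ((fromBlocks H 0 0 S).map σ) z ↔
      torsionClass (H.map σ) (z ∘ Sum.inl) := by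
    rw [map_fromBlocks_zero_zero]
    exact torsionClass_fromBlocks_zero_zero_iff (hS.map σ.mapMatrix)
  refine ⟨fun x => (torsion_iff (Sum.elim x 0)).symm, fun x => solvable_iff (Sum.elim x 0),
    fun x' hx' => ⟨x' ∘ Sum.inl, (torsion_iff x').1 hx', (solvable_iff _).2 ⟨0, ?_⟩⟩,
    fun x' hx' => (solvable_iff _).2 (hΔann _ ((torsion_iff x').1 hx')),
    fun x y x₀ y₀ X₀ Y₀ hx hy hX hY => ?_⟩
  · ext i
    simp
  · rw [smul_elim] at hX hY
    exact dotProduct_fromBlocks_mulVec_comp_eq hH hS hx hy hX hY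

end Stabilization

theorem isUnit_hyperbolic (R : Type*) [Semiring R] :
    IsUnit (!![0, 1; 1, 0] : Matrix (Fin 2) (Fin 2) R) := by
  have mul_self : (!![0, 1; 1, 0] : Matrix (Fin 2) (Fin 2) R) * !![0, 1; 1, 0] = 1 := by
    simp [one_fin_two]
  exact ⟨⟨_, _, mul_self, mul_self⟩, rfl⟩

/-- for `H' = H ⊕ S` with `S = [[0,1],[1,0]]`, the map `[x] ↦ [(x,0,0)]` is an
isomorphism of `Tor(Rⁿ/H̄Rⁿ)` onto `Tor(R^{n+2}/H̄'R^{n+2})`, `Δ` annihilates the latter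
(and so defines `λ_{H'}`), and this isomorphism is an isometry. -/
theorem lambda_stabilization_hyperbolic
    {R : Type*} [CommRing R] [IsDomain R] [IsNoetherianRing R] [UniqueFactorizationMonoid R]
    (σ : R →+* R) (hσ : Function.Involutive σ)
    {n : ℕ} (H : Matrix (Fin n) (Fin n) R) (hH : (H.map σ)ᵀ = H)
    (Δ : R) (hΔ0 : Δ ≠ 0) (hΔσ : σ Δ = Δ)
    (hΔann : ∀ v : Fin n → R, torsionClass (H.map σ) v →
      ∃ v₀ : Fin n → R, (H.map σ) *ᵥ v₀ = Δ • v) :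
    -- `[x] ↦ [(x,0,0)]` maps torsion classes to torsion classes, bijectively:
    (∀ x : Fin n → R, torsionClass (H.map σ) x ↔
      torsionClass ((Matrix.fromBlocks H 0 0 !![0, 1; 1, 0]).map σ) (Sum.elim x 0)) ∧
    (∀ x : Fin n → R,
      (∃ w' : (Fin n ⊕ Fin 2) → R,
        ((Matrix.fromBlocks H 0 0 !![0, 1; 1, 0]).map σ) *ᵥ w' = Sum.elim x 0) →
      ∃ w : Fin n → R, (H.map σ) *ᵥ w = x) ∧
    (∀ x' : (Fin n ⊕ Fin 2) → R,
      torsionClass ((Matrix.fromBlocks H 0 0 !![0, 1; 1, 0]).map σ) x' →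
      ∃ x : Fin n → R, torsionClass (H.map σ) x ∧
        ∃ w' : (Fin n ⊕ Fin 2) → R,
          ((Matrix.fromBlocks H 0 0 !![0, 1; 1, 0]).map σ) *ᵥ w' = x' - Sum.elim x 0) ∧
    -- `Δ` annihilates the torsion of the cokernel of `H̄'`
    (∀ x' : (Fin n ⊕ Fin 2) → R,
      torsionClass ((Matrix.fromBlocks H 0 0 !![0, 1; 1, 0]).map σ) x' →
      ∃ x₀' : (Fin n ⊕ Fin 2) → R,
        ((Matrix.fromBlocks H 0 0 !![0, 1; 1, 0]).map σ) *ᵥ x₀' = Δ • x') ∧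
    -- the isomorphism is an isometry: `λ_{H'}([(x,0,0)],[(y,0,0)]) = λ_H([x],[y])` in `Q(R)/R`
    (∀ x y x₀ y₀ : Fin n → R, ∀ X₀ Y₀ : (Fin n ⊕ Fin 2) → R,
      torsionClass (H.map σ) x → torsionClass (H.map σ) y →
      (H.map σ) *ᵥ x₀ = Δ • x → (H.map σ) *ᵥ y₀ = Δ • y →
      ((Matrix.fromBlocks H 0 0 !![0, 1; 1, 0]).map σ) *ᵥ X₀ = Δ • Sum.elim x 0 →
      ((Matrix.fromBlocks H 0 0 !![0, 1; 1, 0]).map σ) *ᵥ Y₀ = Δ • Sum.elim y 0 →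
      ∃ r : R, algebraMap R (FractionRing R) r =
        algebraMap R (FractionRing R)
            (X₀ ⬝ᵥ (Matrix.fromBlocks H 0 0 !![0, 1; 1, 0] *ᵥ (σ ∘ Y₀))) /
          (algebraMap R (FractionRing R) Δ) ^ 2 -
        algebraMap R (FractionRing R) (x₀ ⬝ᵥ (H *ᵥ (σ ∘ y₀))) /
          (algebraMap R (FractionRing R) Δ) ^ 2) := by
  obtain ⟨torsion_iff, solvable_iff, surjective, annihilates, isometry⟩ :=
    lambda_stabilization_hyperbolic_general σ H hH _ (isUnit_hyperbolic R) Δ hΔann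
  exact ⟨torsion_iff, fun x => (solvable_iff x).1, surjective, annihilates,
    fun x y x₀ y₀ X₀ Y₀ _ _ hx hy hX hY =>
      ⟨0, by rw [isometry x y x₀ y₀ X₀ Y₀ hx hy hX hY, map_zero, sub_self]⟩⟩
end

section
/- The pairing λ_H does not depend on the choice of Δ: if Δ and Δ' are two nonzero elements of R with Δ̄ = Δ and Δ̄' = Δ', both annihilating the torsion submodule Tor_R(R^n/H̄R^n), then for all torsion classes [v], [w] the values (1/Δ²)·v₀ᵀ·H·w̄₀ and (1/Δ'²)·v₀'ᵀ·H·w̄₀' agree in Q(R)/R, where H̄v₀ = Δ·v, H̄w₀ = Δ·w, H̄v₀' = Δ'·v and H̄w₀' = Δ'·w. -/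
open Matrix

/-! Write `H̄ v₀ = a v` and `H̄ w₀ = b w`. Since `H` is hermitian, these say `v₀ᵀ H = a vᵀ` and
`H w̄₀ = b̄ w̄`, so `v₀ᵀ H w̄₀ / (a b̄)` equals both `vᵀ w̄₀ / b̄` and `v₀ᵀ w̄ / a`. The first
expression does not involve `(a, v₀)` and the second does not involve `(b, w₀)`. The two choices can
therefore be replaced one after the other, and the values agree already in `Q(R)`. -/

section CrossMultiplication

variable {R m n : Type*} [CommSemiring R] [Fintype m] [Fintype n] {A : Matrix m n R}

theorem mul_dotProduct_mulVec_eq_of_vecMul_eq_smul {a a' : R} {x x' : m → R} {v : n → R}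
    (hx : x ᵥ* A = a • v) (hx' : x' ᵥ* A = a' • v) (y : n → R) :
    a' * (x ⬝ᵥ A *ᵥ y) = a * (x' ⬝ᵥ A *ᵥ y) := by
  simp only [dotProduct_mulVec, hx, hx', smul_dotProduct, smul_eq_mul, mul_left_comm]

theorem mul_dotProduct_mulVec_eq_of_mulVec_eq_smul {b b' : R} {y y' : n → R} {w : m → R}
    (hy : A *ᵥ y = b • w) (hy' : A *ᵥ y' = b' • w) (x : m → R) :
    b' * (x ⬝ᵥ A *ᵥ y) = b * (x ⬝ᵥ A *ᵥ y') := by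
  simp only [hy, hy', dotProduct_smul, smul_eq_mul, mul_left_comm]

theorem dotProduct_mulVec_mul_eq_mul {a a' b b' : R}
    {x x' : m → R} {v : n → R} {y y' : n → R} {w : m → R}
    (hx : x ᵥ* A = a • v) (hx' : x' ᵥ* A = a' • v)
    (hy : A *ᵥ y = b • w) (hy' : A *ᵥ y' = b' • w) :
    (x ⬝ᵥ A *ᵥ y) * (a' * b') = (x' ⬝ᵥ A *ᵥ y') * (a * b) :=
  calc (x ⬝ᵥ A *ᵥ y) * (a' * b')
      = b' * (a' * (x ⬝ᵥ A *ᵥ y)) := by ring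
    _ = b' * (a * (x' ⬝ᵥ A *ᵥ y)) := by
        rw [mul_dotProduct_mulVec_eq_of_vecMul_eq_smul hx hx']
    _ = a * (b' * (x' ⬝ᵥ A *ᵥ y)) := mul_left_comm ..
    _ = a * (b * (x' ⬝ᵥ A *ᵥ y')) := by
        rw [mul_dotProduct_mulVec_eq_of_mulVec_eq_smul hy hy']
    _ = (x' ⬝ᵥ A *ᵥ y') * (a * b) := by ring

end CrossMultiplication

section Hermitian

theorem map_map_eq_of_transpose_map_eq {R n : Type*} {σ : R → R} {H : Matrix n n R}
    (hH : (H.map σ)ᵀ = H) : (H.map σ).map σ = H :=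
  calc (H.map σ).map σ
      = ((H.map σ)ᵀ.map σ)ᵀ := by rw [← transpose_map, transpose_transpose]
    _ = H := by rw [hH, hH]

variable {R n : Type*} [CommSemiring R] [Fintype n] {σ : R →+* R} {H : Matrix n n R}

theorem vecMul_eq_map_mulVec_of_transpose_map_eq (hH : (H.map σ)ᵀ = H) (x : n → R) :
    x ᵥ* H = H.map σ *ᵥ x := by
  rw [← vecMul_transpose, hH]

theorem mulVec_comp_eq_comp_map_mulVec_of_transpose_map_eq (hH : (H.map σ)ᵀ = H) (y : n → R) :
    H *ᵥ (σ ∘ y) = σ ∘ (H.map σ *ᵥ y) := by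
  funext i
  rw [Function.comp_apply, RingHom.map_mulVec, map_map_eq_of_transpose_map_eq hH]

theorem mulVec_comp_eq_smul_of_map_mulVec_eq_smul (hH : (H.map σ)ᵀ = H) {b : R} {y w : n → R}
    (hy : H.map σ *ᵥ y = b • w) : H *ᵥ (σ ∘ y) = σ b • (σ ∘ w) := by
  rw [mulVec_comp_eq_comp_map_mulVec_of_transpose_map_eq hH, hy]
  exact funext fun i => map_mul σ b (w i)

end Hermitian

/-- The pairing is conjugate-linear in its second argument, so a preimage of `b • w` contributes
`σ b` to the denominator; for `a = b = Δ` with `σ Δ = Δ` the denominator is the usual `Δ ^ 2`. -/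
theorem lambda_independent_of_Delta_general
    {R K n : Type*} [CommSemiring R] [Semifield K] [Algebra R K] [FaithfulSMul R K] [Fintype n]
    {σ : R →+* R} {H : Matrix n n R} (hH : (H.map σ)ᵀ = H)
    {a b a' b' : R} (ha : a ≠ 0) (hb : σ b ≠ 0) (ha' : a' ≠ 0) (hb' : σ b' ≠ 0)
    {v w v₀ w₀ v₀' w₀' : n → R}
    (hv₀ : H.map σ *ᵥ v₀ = a • v) (hw₀ : H.map σ *ᵥ w₀ = b • w)
    (hv₀' : H.map σ *ᵥ v₀' = a' • v) (hw₀' : H.map σ *ᵥ w₀' = b' • w) :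
    algebraMap R K (v₀ ⬝ᵥ H *ᵥ (σ ∘ w₀)) / (algebraMap R K a * algebraMap R K (σ b)) =
      algebraMap R K (v₀' ⬝ᵥ H *ᵥ (σ ∘ w₀')) /
        (algebraMap R K a' * algebraMap R K (σ b')) := by
  have algebraMap_ne_zero {r : R} (hr : r ≠ 0) : algebraMap R K r ≠ 0 :=
    (map_ne_zero_iff _ (FaithfulSMul.algebraMap_injective R K)).mpr hr
  have cross_mul :
      (v₀ ⬝ᵥ H *ᵥ (σ ∘ w₀)) * (a' * σ b') = (v₀' ⬝ᵥ H *ᵥ (σ ∘ w₀')) * (a * σ b) :=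
    dotProduct_mulVec_mul_eq_mul
      ((vecMul_eq_map_mulVec_of_transpose_map_eq hH v₀).trans hv₀)
      ((vecMul_eq_map_mulVec_of_transpose_map_eq hH v₀').trans hv₀')
      (mulVec_comp_eq_smul_of_map_mulVec_eq_smul hH hw₀)
      (mulVec_comp_eq_smul_of_map_mulVec_eq_smul hH hw₀')
  rw [div_eq_div_iff (mul_ne_zero (algebraMap_ne_zero ha) (algebraMap_ne_zero hb))
    (mul_ne_zero (algebraMap_ne_zero ha') (algebraMap_ne_zero hb'))]
  simpa only [map_mul] using congrArg (algebraMap R K) cross_mul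

/-- the pairing `λ_H` does not depend on the choice of the annihilating
element `Δ`: the values computed with `Δ` and with `Δ'` agree in `Q(R)/R`. -/
theorem lambda_independent_of_Delta
    {R : Type*} [CommRing R] [IsDomain R] [IsNoetherianRing R] [UniqueFactorizationMonoid R]
    (σ : R →+* R) (hσ : Function.Involutive σ)
    {n : ℕ} (H : Matrix (Fin n) (Fin n) R) (hH : (H.map σ)ᵀ = H)
    (Δ Δ' : R) (hΔ0 : Δ ≠ 0) (hΔ'0 : Δ' ≠ 0) (hΔσ : σ Δ = Δ) (hΔ'σ : σ Δ' = Δ')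
    (hΔann : ∀ v : Fin n → R, torsionClass (H.map σ) v →
      ∃ v₀ : Fin n → R, (H.map σ) *ᵥ v₀ = Δ • v)
    (hΔ'ann : ∀ v : Fin n → R, torsionClass (H.map σ) v →
      ∃ v₀ : Fin n → R, (H.map σ) *ᵥ v₀ = Δ' • v)
    (v w v₀ w₀ v₀' w₀' : Fin n → R)
    (hv : torsionClass (H.map σ) v) (hw : torsionClass (H.map σ) w)
    (hv₀ : (H.map σ) *ᵥ v₀ = Δ • v) (hw₀ : (H.map σ) *ᵥ w₀ = Δ • w)
    (hv₀' : (H.map σ) *ᵥ v₀' = Δ' • v) (hw₀' : (H.map σ) *ᵥ w₀' = Δ' • w) :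
    ∃ r : R, algebraMap R (FractionRing R) r =
      algebraMap R (FractionRing R) (v₀ ⬝ᵥ (H *ᵥ (σ ∘ w₀))) /
        (algebraMap R (FractionRing R) Δ) ^ 2 -
      algebraMap R (FractionRing R) (v₀' ⬝ᵥ (H *ᵥ (σ ∘ w₀'))) /
        (algebraMap R (FractionRing R) Δ') ^ 2 := by
  refine ⟨0, (map_zero _).trans (sub_eq_zero.mpr ?_).symm⟩
  simpa only [hΔσ, hΔ'σ, sq] using lambda_independent_of_Delta_general (K := FractionRing R) hH
    hΔ0 (hΔσ.symm ▸ hΔ0) hΔ'0 (hΔ'σ.symm ▸ hΔ'0) hv₀ hw₀ hv₀' hw₀'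
end
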